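/- Let n ≥ 3 and let 𝒜 = {[A₁],…,[A_r]} be a malnormal subgroup system of F_n, with L, Γ_i, 𝒞, F_n − 𝒜 and Cyl(𝒞) as in the context. Then every compact open subset C of ∂²(F_n,𝒜) is a finite disjoint union of cylinders from Cyl(𝒞): there exist k ≥ 0, elements g₁,…,g_k ∈ F_n and w₁,…,w_k ∈ F_n − 𝒜 such that the sets g_i·C(γ_{w_i}) (1 ≤ i ≤ k) are pairwise disjoint and C = ⋃_{i=1}^k g_i·C(γ_{w_i}). -/

import Mathlib

/-!
The `trace` of a pair `{ξ, η}` at radius `R` is the unordered pair of points `u`, `v` where the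
rays `ξ`, `η` cross the sphere of radius `R` about `1` in the Cayley tree. If `u ≠ v`, the set of
all pairs with this trace is exactly the translated cylinder `u · C(γ_{u⁻¹v})`
(`image_cylinder`). For a fixed `R` these sets are finitely many and pairwise disjoint, they are
open, and as `R` grows they form neighbourhood bases (`exists_trace_subset`). So it suffices to
find one radius `R` such that, for every point of `C`, the class of equal trace is contained in
`C` and the label `u⁻¹v` lies in `F_n − 𝒜`. Both conditions persist when `R` grows and depend only
on the trace, so compactness reduces the search for `R` to a single point of `C`.

For a single point, openness of `C` handles the first condition. The second says that a geodesic
whose ends are not both in the limit set of one conjugate `B` of some `A_i` contains a subpath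
labelled by an element of `𝒞` (`exists_crosses`). Indeed, if it contains none, each of its
subpaths of length `L + 2` lies in some tree `T_B`; consecutive subpaths overlap in length
`L + 1`, which exceeds the diameter bound for two distinct trees, so the whole geodesic lies in a
single `T_B` (`exists_tree_of_not_FmA`). Every vertex of `T_B` lies on the axis of some
`a ∈ B`, and one of the two directions along the axis continues the geodesic from `1` to that
vertex without backtracking; hence the vertex is a prefix of some power of `a`
(`exists_prefix_of_treeVerts`), and both ends of the geodesic belong to `∂B`.
-/

open scoped Classical
open MeasureTheory

noncomputable section

namespace RelCurr

/-- The alphabet `𝔄 = ℬ ∪ ℬ⁻¹`: a letter is a generator together with a sign. -/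
abbrev Letter (n : ℕ) := Fin n × Bool

/-- The inverse of a letter. -/
def linv {n : ℕ} (x : Letter n) : Letter n := (x.1, !x.2)

/-- The free group of rank `n` on the basis `Fin n`. -/
abbrev F (n : ℕ) := FreeGroup (Fin n)

/-- The reduced word of an element of `F n`. -/
def rword {n : ℕ} (g : F n) : List (Letter n) := FreeGroup.toWord g

/-- The length `|g|` of the reduced word of `g`. -/
def wlen {n : ℕ} (g : F n) : ℕ := (rword g).length

/-- The single-letter element of `F n` given by a letter. -/
def letterE {n : ℕ} (b : Letter n) : F n := FreeGroup.mk [b]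

/-- The conjugate subgroup `g A g⁻¹`. -/
def conjSub {n : ℕ} (g : F n) (A : Subgroup (F n)) : Subgroup (F n) :=
  Subgroup.map (MulAut.conj g).toMonoidHom A

/-- A subgroup `A` is malnormal if `xAx⁻¹ ∩ A = {1}` for every `x ∉ A`. -/
def Malnormal {n : ℕ} (A : Subgroup (F n)) : Prop :=
  ∀ x : F n, x ∉ A → conjSub x A ⊓ A = ⊥

/-- The word metric on the Cayley tree `T`. -/
def dist' {n : ℕ} (x y : F n) : ℕ := wlen (x⁻¹ * y)

/-- The cyclically reduced length of `a`. -/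
def cycLen {n : ℕ} (a : F n) : ℕ := sInf { m | ∃ h : F n, wlen (h⁻¹ * a * h) = m }

/-- The vertex set of the minimal `A`-invariant subtree `T_A` of the Cayley tree:
the union of the axes of the nontrivial elements of `A`. -/
def treeVerts {n : ℕ} (A : Subgroup (F n)) : Set (F n) :=
  { h | ∃ a ∈ A, a ≠ 1 ∧ wlen (h⁻¹ * a * h) = cycLen a }

/-- `γ_w ⊆ S`: every prefix of the reduced word of `w` lies in the vertex set `S`. -/
def pathIn {n : ℕ} (w : F n) (S : Set (F n)) : Prop :=
  ∀ m ≤ wlen w, FreeGroup.mk ((rword w).take m) ∈ S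

/-- An element is cyclically reduced if the last letter of its reduced word is not the
inverse of the first letter. -/
def CyclicallyReduced {n : ℕ} (w : F n) : Prop :=
  ∀ x y : Letter n, (rword w).head? = some x → (rword w).getLast? = some y → y ≠ linv x

/-- `v` is a length-one extension of `w`. -/
def LengthOneExt {n : ℕ} (w v : F n) : Prop :=
  ∃ b : Letter n, v = w * letterE b ∧ wlen v = wlen w + 1

/-- `a` is an extension of `w`: the reduced word of `w` is a proper prefix of that of `a`. -/
def ExtensionOf {n : ℕ} (w a : F n) : Prop :=
  rword w <+: rword a ∧ wlen w < wlen a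

/-- `g` is a proper power. -/
def IsProperPower {n : ℕ} (g : F n) : Prop := ∃ (h : F n) (k : ℕ), 2 ≤ k ∧ g = h ^ k

section System

variable {n r : ℕ} (A : Fin r → Subgroup (F n))

/-- `[B] ∈ 𝒜`, i.e. `B` is a conjugate of one of the subgroups of the system. -/
def InSystem (B : Subgroup (F n)) : Prop := ∃ (i : Fin r) (g : F n), B = conjSub g (A i)

/-- The family `A` represents a subgroup system: finite rank subgroups distinct
from `{1}` and `F n`. -/
def IsSystem : Prop := (∀ i, (A i).FG) ∧ (∀ i, A i ≠ ⊥) ∧ (∀ i, A i ≠ ⊤)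

/-- The subgroup system is malnormal. -/
def SystemMalnormal : Prop :=
  (∀ i, Malnormal (A i)) ∧
  ∀ B₁ B₂ : Subgroup (F n), InSystem A B₁ → InSystem A B₂ → B₁ ≠ B₂ → B₁ ⊓ B₂ = ⊥

/-- `g` is `𝒜`-peripheral: trivial or contained in a conjugate of one of the `A i`. -/
def Peripheral (g : F n) : Prop := g = 1 ∨ ∃ B, InSystem A B ∧ g ∈ B

/-- The diameter of the intersection of the trees of two distinct subgroups of the
system is at most `L`. -/
def DiamBound (L : ℕ) : Prop :=
  ∀ B₁ B₂ : Subgroup (F n), InSystem A B₁ → InSystem A B₂ → B₁ ≠ B₂ →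
    ∀ x ∈ treeVerts B₁ ∩ treeVerts B₂, ∀ y ∈ treeVerts B₁ ∩ treeVerts B₂, dist' x y ≤ L

/-- `B ∈ Γ_i`: `B` is a conjugate of `A i` whose tree contains the base point `1`. -/
def GammaMem (i : Fin r) (B : Subgroup (F n)) : Prop :=
  (∃ g : F n, B = conjSub g (A i)) ∧ (1 : F n) ∈ treeVerts B

/-- The finite set `𝒞` of words of length `L+2` whose path is contained in no tree
`T_B` with `B ∈ Γ_i`, for every `i`. -/
def Ccal (L : ℕ) : Set (F n) :=
  { w | wlen w = L + 2 ∧ ∀ (i : Fin r) (B : Subgroup (F n)), GammaMem A i B →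
      ¬ pathIn w (treeVerts B) }

/-- `F_n − 𝒜`: the words containing an element of `𝒞` as a contiguous subword. -/
def FmA (L : ℕ) : Set (F n) := { w | ∃ x ∈ Ccal A L, rword x <:+: rword w }

/-- `S_k`: words of length `k` not containing any element of `𝒞` as a subword. -/
def Sk (L k : ℕ) : Set (F n) := { w | wlen w = k ∧ w ∉ FmA A L }

end System

/-! ### The boundary of `F n` -/

/-- An infinite reduced word. -/
def IsRed {n : ℕ} (ξ : ℕ → Letter n) : Prop := ∀ i, ξ (i + 1) ≠ linv (ξ i)

/-- The Gromov boundary `∂F_n`, realized as the space of infinite reduced words,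
topologized as a subspace of the product space. -/
def Boundary (n : ℕ) : Type := { ξ : ℕ → Letter n // IsRed ξ }

instance {n : ℕ} : TopologicalSpace (Boundary n) :=
  instTopologicalSpaceSubtype

/-- The length-`m` prefix of a boundary point. -/
def bpre {n : ℕ} (ξ : Boundary n) (m : ℕ) : List (Letter n) :=
  (List.range m).map ξ.1

/-- The reduced word of `w` is a prefix of the infinite word `ξ`. -/
def wordPrefixOf {n : ℕ} (w : F n) (ξ : Boundary n) : Prop :=
  bpre ξ (wlen w) = rword w

/-- The boundary (limit set) `∂A ⊆ ∂F_n` of a subgroup `A`. -/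
def limitSet {n : ℕ} (A : Subgroup (F n)) : Set (Boundary n) :=
  { ξ | ∀ m : ℕ, ∃ a ∈ A, bpre ξ m <+: rword a }

/-- `ξ = g^{+∞}`: `ξ` is the limit of the reduced words of the powers of `g`. -/
def IsPosLimit {n : ℕ} (g : F n) (ξ : Boundary n) : Prop :=
  ∀ m : ℕ, ∃ N : ℕ, ∀ k ≥ N, bpre ξ m <+: rword (g ^ k)

/-- The number of letters cancelled when concatenating the word `l` with the
infinite reduced word `ξ`. -/
def cancelLen {n : ℕ} (l : List (Letter n)) (ξ : ℕ → Letter n) : ℕ :=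
  sSup { j | j ≤ l.length ∧ ∀ i < j, l.reverse[i]? = some (linv (ξ i)) }

/-- The sequence underlying the action of `g` on a boundary point: left multiplication
followed by cancellation. -/
def actSeq {n : ℕ} (g : F n) (ξ : ℕ → Letter n) : ℕ → Letter n :=
  fun m =>
    if h : m < (rword g).length - cancelLen (rword g) ξ then
      (rword g).get ⟨m, by omega⟩
    else ξ (m - ((rword g).length - cancelLen (rword g) ξ) + cancelLen (rword g) ξ)

/-- The action of `F n` on its boundary: left multiplication followed by cancellation.
(The sequence `actSeq g ξ.1` is always reduced, so the first branch always applies.) -/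
def bAct {n : ℕ} (g : F n) (ξ : Boundary n) : Boundary n :=
  if h : IsRed (actSeq g ξ.1) then ⟨actSeq g ξ.1, h⟩ else ξ

/-! ### The double boundary -/

/-- The diagonal action of `F n` on `Sym2 (∂F_n)`, whose restriction to the set of
non-diagonal classes is the action on the double boundary `∂²F_n`. -/
def dbAct {n : ℕ} (g : F n) : Sym2 (Boundary n) → Sym2 (Boundary n) := Sym2.map (bAct g)

/-- `∂²𝒜`: the classes `{ξ,η}` with both endpoints in `g·∂A_i = ∂(gA_ig⁻¹)` for some
`i` and `g`. -/
def dblBndA {n r : ℕ} (A : Fin r → Subgroup (F n)) : Set (Sym2 (Boundary n)) :=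
  { z | ∃ (i : Fin r) (g : F n) (ξ η : Boundary n), z = s(ξ, η) ∧
      ξ ∈ limitSet (conjSub g (A i)) ∧ η ∈ limitSet (conjSub g (A i)) }

/-- The double boundary `∂²(F_n,𝒜)` of `F n` relative to `𝒜`, as a subset of
`Sym2 (∂F_n)`: non-diagonal classes not lying in `∂²𝒜`. -/
def relSet {n r : ℕ} (A : Fin r → Subgroup (F n)) : Set (Sym2 (Boundary n)) :=
  { z | ¬ z.IsDiag } \ dblBndA A

/-- The cylinder set `C(γ_w) ⊆ ∂²F_n` of the geodesic path from `1` to `w`. -/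
def cylinder {n : ℕ} (w : F n) : Set (Sym2 (Boundary n)) :=
  { z | ∃ ξ η : Boundary n, z = s(ξ, η) ∧ ξ.1 0 ≠ η.1 0 ∧
      (wordPrefixOf w ξ ∨ wordPrefixOf w η) }

instance {n : ℕ} : MeasurableSpace (Sym2 (Boundary n)) := borel _

/-- The action of `g ∈ F n` on `∂²(F_n,𝒜)`. (The action of `F n` preserves
`∂²(F_n,𝒜)`, so the first branch always applies.) -/
def relAct {n r : ℕ} (A : Fin r → Subgroup (F n)) (g : F n) (z : ↥(relSet A)) :
    ↥(relSet A) :=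
  if h : dbAct g z.1 ∈ relSet A then ⟨dbAct g z.1, h⟩ else z

/-- The cylinder `C(γ_w)` as a subset of `∂²(F_n,𝒜)`. -/
def relCyl {n r : ℕ} (A : Fin r → Subgroup (F n)) (w : F n) : Set ↥(relSet A) :=
  Subtype.val ⁻¹' cylinder w

/-- The translated cylinder `g·C(γ_w)` as a subset of `∂²(F_n,𝒜)`. -/
def relCylG {n r : ℕ} (A : Fin r → Subgroup (F n)) (g w : F n) : Set ↥(relSet A) :=
  Subtype.val ⁻¹' (dbAct g '' cylinder w)

/-- A relative current on `(F_n,𝒜)`: an `F_n`-invariant Radon measure on the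
locally compact space `∂²(F_n,𝒜)` (finite on compacts, outer regular, inner regular
on open sets). -/
def IsRelCurrent {n r : ℕ} (A : Fin r → Subgroup (F n)) (μ : Measure ↥(relSet A)) : Prop :=
  (∀ (g : F n) (s : Set ↥(relSet A)), MeasurableSet s → μ (relAct A g ⁻¹' s) = μ s) ∧
  μ.Regular

/-- The `F_n`-orbit of a point of `Sym2 (∂F_n)`, inside `∂²(F_n,𝒜)`. -/
def orbitOf {n r : ℕ} (A : Fin r → Subgroup (F n)) (z : Sym2 (Boundary n)) :
    Set ↥(relSet A) :=
  { y | ∃ h : F n, (y : Sym2 (Boundary n)) = dbAct h z }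


/-! ### Reduced words -/

open FreeGroup in
lemma rword_mk {n : ℕ} {l : List (Letter n)} (h : IsReduced l) : rword (mk l) = l := by
  rw [rword, toWord_mk]; exact h.reduce_eq

open FreeGroup in
lemma isReduced_rword {n : ℕ} (g : F n) : IsReduced (rword g) := isReduced_toWord

open FreeGroup in
lemma mk_rword {n : ℕ} (g : F n) : mk (rword g) = g := mk_toWord

/-- The relation defining reduced words, phrased with `linv`. -/
lemma rel_iff {n : ℕ} (a b : Letter n) : (a.1 = b.1 → a.2 = b.2) ↔ b ≠ linv a := by
  obtain ⟨a, s⟩ := a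
  obtain ⟨b, t⟩ := b
  simp only [linv, ne_eq, Prod.mk.injEq, not_and]
  cases s <;> cases t <;> simp <;> tauto

@[simp] lemma linv_linv {n : ℕ} (a : Letter n) : linv (linv a) = a := by
  simp [linv]

lemma linv_inj {n : ℕ} {a b : Letter n} (h : linv a = linv b) : a = b := by
  rw [← linv_linv a, h, linv_linv]

open FreeGroup in
lemma isReduced_append {n : ℕ} {l₁ l₂ : List (Letter n)} :
    IsReduced (l₁ ++ l₂) ↔ IsReduced l₁ ∧ IsReduced l₂ ∧
      ∀ x ∈ l₁.getLast?, ∀ y ∈ l₂.head?, y ≠ linv x := by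
  simp only [FreeGroup.IsReduced, List.isChain_append, rel_iff]

open FreeGroup in
lemma invRev_eq {n : ℕ} (l : List (Letter n)) : invRev l = (l.map linv).reverse := rfl

open FreeGroup in
lemma getLast?_invRev {n : ℕ} (l : List (Letter n)) :
    (invRev l).getLast? = l.head?.map linv := by
  simp [invRev_eq]

open FreeGroup in
lemma head?_invRev {n : ℕ} (l : List (Letter n)) :
    (invRev l).head? = l.getLast?.map linv := by
  simp [invRev_eq]

open FreeGroup in
lemma isReduced_invRev {n : ℕ} {l : List (Letter n)} (h : IsReduced l) :
    IsReduced (invRev l) := by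
  rw [isReduced_iff_reduce_eq, reduce_invRev, h.reduce_eq]

/-- Two reduced words without common first letter: the path from the end of the first to the
end of the second passes through the origin. -/
lemma isReduced_invRev_append {n : ℕ} {a b : List (Letter n)} (ha : FreeGroup.IsReduced a)
    (hb : FreeGroup.IsReduced b) (h : ∀ x ∈ a.head?, ∀ y ∈ b.head?, x ≠ y) :
    FreeGroup.IsReduced (FreeGroup.invRev a ++ b) := by
  rw [isReduced_append]
  refine ⟨isReduced_invRev ha, hb, ?_⟩
  intro x hx y hy
  rw [getLast?_invRev] at hx
  simp only [Option.mem_def, Option.map_eq_some_iff] at hx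
  obtain ⟨u, hu, rfl⟩ := hx
  rw [linv_linv]
  exact (h u hu y hy).symm

/-- Two distinct words of the same length branch off after a longest common prefix. -/
lemma exists_branch {n : ℕ} : ∀ (l₁ l₂ : List (Letter n)), l₁.length = l₂.length → l₁ ≠ l₂ →
    ∃ p x y a b, x ≠ y ∧ l₁ = p ++ x :: a ∧ l₂ = p ++ y :: b
  | [], [], _, h => absurd rfl h
  | [], _ :: _, h, _ => by simp at h
  | _ :: _, [], h, _ => by simp at h
  | x :: a, y :: b, h, hne => by
    by_cases hxy : x = y
    · subst hxy
      obtain ⟨p, u, v, a', b', huv, h1, h2⟩ :=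
        exists_branch a b (by simpa using h) (by simpa using hne)
      exact ⟨x :: p, u, v, a', b', huv, by simp [h1], by simp [h2]⟩
    · exact ⟨[], x, y, a, b, hxy, rfl, rfl⟩

lemma mk_inv_mul_mk {n : ℕ} (p a b : List (Letter n)) :
    (FreeGroup.mk (p ++ a))⁻¹ * FreeGroup.mk (p ++ b)
      = FreeGroup.mk (FreeGroup.invRev a ++ b) := by
  simp only [← FreeGroup.mul_mk, ← FreeGroup.inv_mk]
  group

/-- A product of two reduced words cancels a suffix of the first against a prefix of the second. -/
lemma exists_cancel {n : ℕ} (l₂ : List (Letter n)) (h2 : FreeGroup.IsReduced l₂) :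
    ∀ l₁ : List (Letter n), FreeGroup.IsReduced l₁ →
    ∃ p s q, l₁ = p ++ s ∧ l₂ = FreeGroup.invRev s ++ q ∧ FreeGroup.IsReduced (p ++ q) := by
  induction l₂ with
  | nil => exact fun l₁ h => ⟨l₁, [], [], by simp, by simp, by simpa using h⟩
  | cons y t ih =>
    intro l₁ h1
    by_cases hr : FreeGroup.IsReduced (l₁ ++ y :: t)
    · exact ⟨l₁, [], y :: t, by simp, by simp, hr⟩
    · rw [isReduced_append] at hr
      push Not at hr
      obtain ⟨x, hx, y', hy', hxy⟩ := hr h1 h2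
      simp only [List.head?_cons, Option.mem_def, Option.some.injEq] at hy'
      subst hy'
      obtain ⟨l, rfl⟩ := List.mem_getLast?_eq_getLast hx |> fun ⟨h, e⟩ =>
        (⟨l₁.dropLast, by rw [e]; exact (List.dropLast_append_getLast h).symm⟩ :
          ∃ l, l₁ = l ++ [x])
      obtain ⟨p, s, q, rfl, ht, hpq⟩ :=
        ih (h2.infix ⟨[y], [], by simp⟩) l (h1.infix ⟨[], [x], by simp⟩)
      exact ⟨p, s ++ [x], q, by simp, by simp [ht, hxy, FreeGroup.invRev, linv], hpq⟩

/-- Multiplying on the right by `v` destroys at most the last `|v|` letters. -/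
lemma prefix_of_mul {n : ℕ} {l t : List (Letter n)} {v : F n}
    (h : FreeGroup.IsReduced (l ++ t)) (hv : wlen v ≤ t.length) :
    l <+: rword (FreeGroup.mk (l ++ t) * v) := by
  obtain ⟨p, s, q, h1, h2, h3⟩ := exists_cancel (rword v) (isReduced_rword v) _ h
  have hm : FreeGroup.mk (l ++ t) * v = FreeGroup.mk (p ++ q) := by
    rw [← mk_rword v, h1, h2]
    simp only [← FreeGroup.mul_mk, ← FreeGroup.inv_mk]
    group
  rw [hm, rword_mk h3]
  have hl : l.length ≤ p.length := by
    have e1 := congrArg List.length h1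
    have e2 := congrArg List.length h2
    simp only [wlen] at hv
    simp only [List.length_append, FreeGroup.invRev_length] at e1 e2
    omega
  exact (List.prefix_of_prefix_length_le (List.prefix_append l t)
    (h1 ▸ List.prefix_append p s) hl).trans (List.prefix_append p q)

/-! ### Minimal subtrees -/

lemma wlen_conj_of_ends {n : ℕ} {c : F n} {x : Letter n} {l : List (Letter n)}
    (h : rword c = x :: (l ++ [linv x])) :
    wlen ((letterE x)⁻¹ * c * letterE x) < wlen c := by
  have hc : c = FreeGroup.mk (x :: (l ++ [linv x])) := by rw [← h, mk_rword]
  have hr := isReduced_rword c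
  rw [h] at hr
  have e : (letterE x)⁻¹ * c * letterE x = FreeGroup.mk l := by
    have e1 : FreeGroup.mk (x :: (l ++ [linv x]))
        = letterE x * FreeGroup.mk l * (letterE x)⁻¹ := by
      simp [letterE, FreeGroup.inv_mk, FreeGroup.mul_mk, FreeGroup.invRev, linv]
    rw [hc, e1]; group
  rw [e, wlen, wlen, h, rword_mk (hr.infix ⟨[x], [linv x], by simp⟩)]
  simp only [List.length_cons, List.length_append]
  omega

/-- A vertex on the axis of `a` conjugates `a` to a cyclically reduced word. -/
lemma cyc_of_axis {n : ℕ} {h a : F n} (ha : wlen (h⁻¹ * a * h) = cycLen a) :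
    FreeGroup.IsCyclicallyReduced (rword (h⁻¹ * a * h)) := by
  refine ⟨isReduced_rword _, ?_⟩
  intro y hy x hx
  rw [rel_iff]
  intro hxy
  have hmin : ∀ k : F n, wlen (h⁻¹ * a * h) ≤ wlen (k⁻¹ * (h⁻¹ * a * h) * k) := by
    intro k
    rw [ha]
    exact Nat.sInf_le ⟨h * k, by congr 1; group⟩
  generalize h⁻¹ * a * h = c at *
  obtain ⟨m, hm⟩ : ∃ m, rword c = x :: m := by
    cases hc : rword c with
    | nil => simp [hc] at hx
    | cons u v => simp [hc] at hx; exact ⟨v, by rw [hx]⟩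
  rw [hm] at hy
  rcases List.eq_nil_or_concat m with rfl | ⟨l, z, rfl⟩
  · simp at hy
    subst hy
    have : (x.2 : Bool) = !x.2 := congrArg Prod.snd hxy
    simp at this
  · rw [List.concat_eq_append] at hm hy
    rw [← List.cons_append, List.getLast?_concat] at hy
    obtain rfl : z = y := by simpa using hy
    have hzx : z = linv x := by rw [hxy, linv_linv]
    rw [hzx] at hm
    exact absurd (hmin (letterE x)) (not_le.2 (wlen_conj_of_ends hm))

/-- A vertex of `T_B` is passed by the geodesic from `1` to some element of `B`: follow the axis
through the vertex in the direction that does not backtrack. -/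
lemma exists_prefix_of_treeVerts {n : ℕ} {B : Subgroup (F n)} {h : F n} (hh : h ∈ treeVerts B) :
    ∃ b ∈ B, rword h <+: rword b := by
  obtain ⟨a, haB, ha1, hax⟩ := hh
  have key : ∀ a ∈ B, a ≠ 1 → FreeGroup.IsCyclicallyReduced (rword (h⁻¹ * a * h)) →
      (∀ x ∈ (rword h).getLast?, ∀ y ∈ (rword (h⁻¹ * a * h)).head?, y ≠ linv x) →
      ∃ b ∈ B, rword h <+: rword b := by
    intro a haB ha1 hcyc hends
    set c := h⁻¹ * a * h with hc
    have hc1 : c ≠ 1 := by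
      intro h1
      apply ha1
      have : a = h * c * h⁻¹ := by rw [hc]; group
      rw [this, h1]; group
    have hcne : rword c ≠ [] := by
      rw [rword, Ne, FreeGroup.toWord_eq_nil_iff]; exact hc1
    have hpos : 0 < (rword c).length := List.length_pos_iff.2 hcne
    set N := wlen h + 1 with hN
    refine ⟨a ^ N, B.pow_mem haB N, ?_⟩
    have hpw : a ^ N = FreeGroup.mk (rword h ++ (List.replicate N (rword c)).flatten) * h⁻¹ := by
      have e : (FreeGroup.mk (List.replicate N (rword c)).flatten : F n) = c ^ N := by
        rw [← FreeGroup.pow_mk, mk_rword]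
      have : a = h * c * h⁻¹ := by rw [hc]; group
      rw [← FreeGroup.mul_mk, e, mk_rword, this, conj_pow]
    rw [hpw]
    apply prefix_of_mul
    · have := FreeGroup.IsReduced.append_flatten_replicate_append (L₁ := rword h)
        (L₃ := []) (n := N) hcyc
        (by simpa using isReduced_append.2 ⟨isReduced_rword h, hcyc.1, hends⟩) (by omega)
      simpa using this
    · have : wlen h⁻¹ = wlen h := FreeGroup.norm_inv_eq
      rw [this]
      simp only [List.length_flatten, List.map_replicate, List.sum_replicate, smul_eq_mul]
      nlinarith
  have hcyc := cyc_of_axis hax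
  by_cases hends : ∀ x ∈ (rword h).getLast?, ∀ y ∈ (rword (h⁻¹ * a * h)).head?, y ≠ linv x
  · exact key a haB ha1 hcyc hends
  · push Not at hends
    obtain ⟨x, hx, y, hy, hxy⟩ := hends
    have hinv : rword (h⁻¹ * a⁻¹ * h) = FreeGroup.invRev (rword (h⁻¹ * a * h)) := by
      rw [rword, rword, ← FreeGroup.toWord_inv]; congr 1; group
    refine key a⁻¹ (B.inv_mem haB) (by simpa using ha1) ?_ ?_
    · rw [hinv]
      refine ⟨isReduced_invRev hcyc.1, ?_⟩
      intro u hu v hv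
      rw [getLast?_invRev] at hu
      rw [head?_invRev] at hv
      simp only [Option.mem_def, Option.map_eq_some_iff] at hu hv
      obtain ⟨u, hu, rfl⟩ := hu
      obtain ⟨v, hv, rfl⟩ := hv
      have := hcyc.2 v hv u hu
      rw [rel_iff] at this ⊢
      rw [linv_linv]
      exact this.symm
    · rw [hinv]
      intro x' hx' y' hy'
      rw [head?_invRev] at hy'
      simp only [Option.mem_def, Option.map_eq_some_iff] at hx hx' hy'
      obtain ⟨v, hv, rfl⟩ := hy'
      rw [hx] at hx'
      cases hx'
      have := hcyc.2 v hv y hy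
      rw [rel_iff] at this
      intro h'
      rw [linv_inj h', ← hxy] at this
      exact this rfl

lemma conjSub_conjSub {n : ℕ} (g h : F n) (B : Subgroup (F n)) :
    conjSub g (conjSub h B) = conjSub (g * h) B := by
  simp only [conjSub, Subgroup.map_map]
  congr 1
  ext x
  simp

lemma InSystem.conj {n r : ℕ} {A : Fin r → Subgroup (F n)} {B : Subgroup (F n)}
    (hB : InSystem A B) (g : F n) : InSystem A (conjSub g B) := by
  obtain ⟨i, h, rfl⟩ := hB
  exact ⟨i, g * h, conjSub_conjSub g h _⟩

lemma cycLen_conj {n : ℕ} (g a : F n) : cycLen (g * a * g⁻¹) = cycLen a := by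
  unfold cycLen
  congr 1
  ext m
  constructor
  · rintro ⟨h, rfl⟩
    exact ⟨g⁻¹ * h, by congr 1; group⟩
  · rintro ⟨h, rfl⟩
    exact ⟨g * h, by congr 1; group⟩

lemma mul_mem_treeVerts {n : ℕ} {B : Subgroup (F n)} {h : F n} (hh : h ∈ treeVerts B) (g : F n) :
    g * h ∈ treeVerts (conjSub g B) := by
  obtain ⟨a, ha, ha1, hl⟩ := hh
  refine ⟨g * a * g⁻¹, ⟨a, ha, by simp⟩, ?_, ?_⟩
  · simpa using ha1
  · rw [cycLen_conj, ← hl]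
    congr 1
    group

lemma dist'_take {n : ℕ} {W : List (Letter n)} (hW : FreeGroup.IsReduced W) {j k : ℕ}
    (hjk : j ≤ k) (hk : k ≤ W.length) :
    dist' (FreeGroup.mk (W.take j)) (FreeGroup.mk (W.take k)) = k - j := by
  have h1 : W.take k = W.take j ++ (W.take k).drop j := by
    have := List.take_append_drop j (W.take k)
    rwa [List.take_take, min_eq_left hjk, eq_comm] at this
  have h2 : (FreeGroup.mk (W.take j))⁻¹ * FreeGroup.mk (W.take k)
      = FreeGroup.mk ((W.take k).drop j) := by
    rw [h1, ← FreeGroup.mul_mk, ← h1]; group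
  rw [dist', h2, wlen, rword_mk]
  · simp [hk]
  · exact hW.infix ((List.drop_suffix _ _).isInfix.trans (List.take_prefix _ _).isInfix)

/-- A word avoiding `𝒞` labels a path lying in a single tree of the system: each of its subpaths
of length `L + 2` lies in such a tree, and consecutive ones overlap in length `L + 1`, so that
`DiamBound` forces the trees to agree. -/
lemma exists_tree_of_not_FmA {n r L : ℕ} {A : Fin r → Subgroup (F n)} (hdiam : DiamBound A L)
    {W : List (Letter n)} (hW : FreeGroup.IsReduced W) (hlen : L + 2 ≤ W.length)
    (hF : FreeGroup.mk W ∉ FmA A L) :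
    ∃ B, InSystem A B ∧ ∀ m ≤ W.length, FreeGroup.mk (W.take m) ∈ treeVerts B := by
  have hloc : ∀ j, j + (L + 2) ≤ W.length → ∃ B, InSystem A B ∧
      ∀ m, j ≤ m → m ≤ j + (L + 2) → FreeGroup.mk (W.take m) ∈ treeVerts B := by
    intro j hj
    set u := (W.drop j).take (L + 2) with hu
    have hinf : u <:+: W := (List.take_prefix _ _).isInfix.trans (List.drop_suffix _ _).isInfix
    have hru : rword (FreeGroup.mk u) = u := rword_mk (hW.infix hinf)
    have hul : u.length = L + 2 := by simp [hu]; omega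
    have hnC : FreeGroup.mk u ∉ Ccal A L := by
      intro hC
      exact hF ⟨_, hC, by rw [hru, rword_mk hW]; exact hinf⟩
    have hnC' : ∃ (i : Fin r) (B : Subgroup (F n)), GammaMem A i B ∧
        pathIn (FreeGroup.mk u) (treeVerts B) := by
      by_contra hcon
      push Not at hcon
      exact hnC ⟨by rw [wlen, hru, hul], hcon⟩
    obtain ⟨i, B, ⟨⟨g, rfl⟩, -⟩, hpath⟩ := hnC'
    refine ⟨conjSub (FreeGroup.mk (W.take j)) (conjSub g (A i)),
      InSystem.conj ⟨i, g, rfl⟩ _, ?_⟩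
    intro m hjm hm
    have h1 := hpath (m - j) (by rw [wlen, hru, hul]; omega)
    rw [hru] at h1
    have h2 := mul_mem_treeVerts h1 (FreeGroup.mk (W.take j))
    rw [FreeGroup.mul_mk] at h2
    convert h2 using 2
    rw [hu, List.take_take, min_eq_left (by omega), ← List.take_add]
    congr 1
    omega
  obtain ⟨B, hB, hB0⟩ := hloc 0 (by omega)
  have hind : ∀ j, j + (L + 2) ≤ W.length →
      ∀ m ≤ j + (L + 2), FreeGroup.mk (W.take m) ∈ treeVerts B := by
    intro j
    induction j with
    | zero => exact fun _ m hm => hB0 m (Nat.zero_le _) hm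
    | succ j ih =>
      intro hj m hm
      obtain ⟨B', hB', hBm⟩ := hloc (j + 1) hj
      have hBB : B = B' := by
        by_contra hne
        have := hdiam B B' hB hB' hne (FreeGroup.mk (W.take (j + 1)))
          ⟨ih (by omega) _ (by omega), hBm _ (by omega) (by omega)⟩
          (FreeGroup.mk (W.take (j + (L + 2))))
          ⟨ih (by omega) _ (by omega), hBm _ (by omega) (by omega)⟩
        rw [dist'_take hW (by omega) (by omega)] at this
        omega
      rcases Nat.lt_or_ge (j + (L + 2)) m with hlt | hge
      · rw [hBB]; exact hBm m (by omega) hm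
      · exact ih (by omega) m hge
  refine ⟨B, hB, fun m hm => ?_⟩
  exact hind (W.length - (L + 2)) (by omega) m (by omega)

/-! ### Infinite reduced words and the boundary action -/

lemma bpre_length {n : ℕ} (ξ : Boundary n) (m : ℕ) : (bpre ξ m).length = m := by
  simp [bpre]

/-- The `k` letters of `ξ` following the first `m` ones. -/
def bseg {n : ℕ} (ξ : Boundary n) (m k : ℕ) : List (Letter n) :=
  (List.range k).map fun i => ξ.1 (m + i)

lemma bpre_add {n : ℕ} (ξ : Boundary n) (m k : ℕ) : bpre ξ (m + k) = bpre ξ m ++ bseg ξ m k := by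
  simp [bpre, bseg, List.range_add, Function.comp_def]

lemma bseg_add {n : ℕ} (ξ : Boundary n) (m k l : ℕ) :
    bseg ξ m (k + l) = bseg ξ m k ++ bseg ξ (m + k) l := by
  simp [bseg, List.range_add, Function.comp_def, Nat.add_assoc]

lemma bseg_length {n : ℕ} (ξ : Boundary n) (m k : ℕ) : (bseg ξ m k).length = k := by
  simp [bseg]

lemma bpre_prefix {n : ℕ} (ξ : Boundary n) {m k : ℕ} (h : m ≤ k) : bpre ξ m <+: bpre ξ k := by
  obtain ⟨l, rfl⟩ := Nat.exists_eq_add_of_le h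
  rw [bpre_add]
  exact List.prefix_append _ _

lemma bpre_eq_iff {n : ℕ} {ξ : Boundary n} {l : List (Letter n)} :
    bpre ξ l.length = l ↔ ∀ (i : ℕ) (h : i < l.length), ξ.1 i = l[i] := by
  constructor
  · intro h i hi
    have : (bpre ξ l.length)[i]? = l[i]? := by rw [h]
    simpa [bpre, hi] using this
  · intro h
    apply List.ext_getElem
    · simp [bpre]
    · intro i h1 h2
      simp [bpre, h i h2]

lemma bpre_congr {n : ℕ} {ξ η : Boundary n} {m : ℕ} :
    bpre ξ m = bpre η m ↔ ∀ i < m, ξ.1 i = η.1 i := by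
  simp [bpre]

lemma bpre_mono {n : ℕ} {ξ η : Boundary n} {m k : ℕ} (h : m ≤ k) (he : bpre ξ k = bpre η k) :
    bpre ξ m = bpre η m :=
  bpre_congr.2 fun i hi => bpre_congr.1 he i (hi.trans_le h)

lemma isReduced_bpre {n : ℕ} (ξ : Boundary n) (m : ℕ) : FreeGroup.IsReduced (bpre ξ m) := by
  rw [FreeGroup.IsReduced, List.isChain_iff_getElem]
  intro i hi
  rw [rel_iff]
  simpa [bpre] using ξ.2 i

lemma isReduced_bseg {n : ℕ} (ξ : Boundary n) (m k : ℕ) : FreeGroup.IsReduced (bseg ξ m k) :=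
  (isReduced_bpre ξ (m + k)).infix ⟨bpre ξ m, [], by rw [bpre_add]; simp⟩

/-- The infinite word obtained from `ξ` by replacing its first `k` letters by `p`. -/
lemma exists_splice {n : ℕ} (p : List (Letter n)) (ξ : Boundary n) (k : ℕ)
    (h : FreeGroup.IsReduced (p ++ [ξ.1 k])) :
    ∃ ζ : Boundary n, bpre ζ p.length = p ∧ ∀ m, ζ.1 (p.length + m) = ξ.1 (k + m) := by
  let f : ℕ → Letter n := fun m =>
    if hm : m < p.length then p[m] else ξ.1 (k + (m - p.length))
  have hf1 : ∀ m (hm : m < p.length), f m = p[m] := fun m hm => by simp [f, hm]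
  have hf2 : ∀ m, f (p.length + m) = ξ.1 (k + m) := fun m => by simp [f]
  have hf : IsRed f := by
    intro i
    rcases Nat.lt_or_ge i p.length with hi | hi
    · rw [FreeGroup.IsReduced, List.isChain_iff_getElem] at h
      have := h i (by simpa using hi)
      rw [rel_iff] at this
      rw [hf1 i hi]
      rw [List.getElem_append_left hi] at this
      rcases Nat.lt_or_ge (i + 1) p.length with hi' | hi'
      · rw [hf1 _ hi']
        rwa [List.getElem_append_left hi'] at this
      · have e : i + 1 = p.length + 0 := by omega
        rw [e, hf2]
        rw [List.getElem_append_right hi'] at this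
        simpa using this
    · obtain ⟨m, rfl⟩ := Nat.exists_eq_add_of_le hi
      rw [Nat.add_assoc, hf2, hf2]
      exact ξ.2 (k + m)
  exact ⟨⟨f, hf⟩, bpre_eq_iff.2 hf1, hf2⟩

/-- If `g = p s` and `ξ = s⁻¹ ω` with `p ω` reduced, then `g ξ = p ω`. -/
lemma bAct_eq {n : ℕ} {g : F n} {ξ ζ : Boundary n} {p s : List (Letter n)}
    (hg : rword g = p ++ s) (hs : bpre ξ s.length = FreeGroup.invRev s)
    (hp : bpre ζ p.length = p) (hz : ∀ m, ζ.1 (p.length + m) = ξ.1 (s.length + m)) :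
    bAct g ξ = ζ := by
  have hs' : ∀ i (hi : i < s.length), s.reverse[i]? = some (linv (ξ.1 i)) := by
    intro i hi
    have h1 : bpre ξ (FreeGroup.invRev s).length = FreeGroup.invRev s := by
      rwa [FreeGroup.invRev_length]
    have h2 := bpre_eq_iff.1 h1 i (by rwa [FreeGroup.invRev_length])
    rw [h2]
    simp only [invRev_eq, List.getElem_reverse, List.getElem_map, linv_linv]
    rw [List.getElem?_eq_getElem (by simpa using hi)]
    simp
  have hcan : cancelLen (rword g) ξ.1 = s.length := by
    have hmax : IsGreatest { j | j ≤ (rword g).length ∧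
        ∀ i < j, (rword g).reverse[i]? = some (linv (ξ.1 i)) } s.length := by
      constructor
      · refine ⟨by simp [hg], fun i hi => ?_⟩
        rw [hg, List.reverse_append, List.getElem?_append_left (by simpa using hi)]
        exact hs' i hi
      · rintro j ⟨hj, hji⟩
        by_contra hlt
        push Not at hlt
        have h1 := hji s.length hlt
        rw [hg, List.length_append] at hj
        rw [hg, List.reverse_append, List.getElem?_append_right (by simp)] at h1
        have hpos : 0 < p.length := by omega
        rw [List.length_reverse, Nat.sub_self, List.getElem?_reverse hpos,
          List.getElem?_eq_getElem (by omega)] at h1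
        have h2 := bpre_eq_iff.1 hp (p.length - 1) (by omega)
        have h3 := hz 0
        have h4 := ζ.2 (p.length - 1)
        have e : p.length - 1 + 1 = p.length + 0 := by omega
        simp only [Nat.sub_zero, Option.some.injEq] at h1
        rw [e, h3, h2, h1] at h4
        simp at h4
    exact hmax.csSup_eq
  have hact : actSeq g ξ.1 = ζ.1 := by
    funext m
    unfold actSeq
    have hl : (rword g).length - cancelLen (rword g) ξ.1 = p.length := by
      rw [hcan, hg, List.length_append]; omega
    split_ifs with h
    · have hm : m < p.length := by omega
      rw [bpre_eq_iff.1 hp m hm]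
      simp only [List.get_eq_getElem, hg]
      exact List.getElem_append_left hm
    · rw [hl] at h ⊢
      rw [hcan]
      obtain ⟨k, rfl⟩ := Nat.exists_eq_add_of_le (not_lt.1 h)
      rw [hz]
      exact congrArg ξ.1 (by omega)
  have hred : IsRed (actSeq g ξ.1) := by rw [hact]; exact ζ.2
  exact (dif_pos hred).trans (Subtype.ext hact)

/-! ### Cylinders between two points of a sphere -/

lemma rword_branch {n : ℕ} {p a b : List (Letter n)} {x y : Letter n} (hxy : x ≠ y)
    (ha : FreeGroup.IsReduced (p ++ x :: a)) (hb : FreeGroup.IsReduced (p ++ y :: b)) :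
    FreeGroup.IsReduced (FreeGroup.invRev (x :: a) ++ y :: b) := by
  apply isReduced_invRev_append (ha.infix ⟨p, [], by simp⟩) (hb.infix ⟨p, [], by simp⟩)
  simpa using hxy

/-- The translate by `u` of the cylinder of the path labelled `u⁻¹ v` consists of the geodesics
one of whose ends lies beyond `u` and the other beyond `v`. -/
lemma image_cylinder {n : ℕ} {p a b : List (Letter n)} {x y : Letter n} (hxy : x ≠ y)
    (ha : FreeGroup.IsReduced (p ++ x :: a)) (hb : FreeGroup.IsReduced (p ++ y :: b)) :
    dbAct (FreeGroup.mk (p ++ x :: a)) ''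
        cylinder (FreeGroup.mk (FreeGroup.invRev (x :: a) ++ y :: b))
      = { z | ∃ ξ η : Boundary n, z = s(ξ, η) ∧
          bpre ξ (p ++ x :: a).length = p ++ x :: a ∧
          bpre η (p ++ y :: b).length = p ++ y :: b } := by
  set u := p ++ x :: a with hu
  set W := FreeGroup.invRev (x :: a) ++ y :: b with hWdef
  have hW : FreeGroup.IsReduced W := rword_branch hxy ha hb
  have hrW : rword (FreeGroup.mk W) = W := rword_mk hW
  have hru : rword (FreeGroup.mk u) = u := rword_mk ha
  have hWlen : W.length = (x :: a).length + (y :: b).length := by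
    simp only [hWdef, List.length_append, FreeGroup.invRev_length]
  have hlast : ∃ t, u.getLast? = some t ∧ (x :: a).getLast? = some t := by
    refine ⟨(x :: a).getLast (by simp), ?_, List.getLast?_eq_some_getLast _⟩
    rw [hu, List.getLast?_append, List.getLast?_eq_some_getLast (l := x :: a) (by simp)]
    rfl
  obtain ⟨t, htu, hta⟩ := hlast
  have hWhead : W.head? = some (linv t) := by
    rw [hWdef, List.head?_append, head?_invRev, hta]; rfl
  ext z
  constructor
  · rintro ⟨z', ⟨ξ, η, rfl, h0, hpre⟩, rfl⟩
    -- the symmetric roles of `ξ` and `η` are handled once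
    have key : ∀ ξ η : Boundary n, ξ.1 0 ≠ η.1 0 → wordPrefixOf (FreeGroup.mk W) ξ →
        bpre (bAct (FreeGroup.mk u) η) u.length = u ∧
        bpre (bAct (FreeGroup.mk u) ξ) (p ++ y :: b).length = p ++ y :: b := by
      intro ξ η h0 hpre
      rw [wordPrefixOf, wlen, hrW] at hpre
      have hpre' := bpre_eq_iff.1 hpre
      have hξ0 : ξ.1 0 = linv t := by
        have hpos : 0 < W.length := by rw [hWlen]; simp
        rw [hpre' 0 hpos]
        rw [List.head?_eq_getElem?, List.getElem?_eq_getElem hpos] at hWhead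
        exact Option.some.inj hWhead
      constructor
      · obtain ⟨ζ, hζ1, hζ2⟩ := exists_splice u η 0 (by
          rw [isReduced_append]
          refine ⟨ha, .singleton, ?_⟩
          intro c hc d hd
          rw [htu] at hc
          cases hc
          cases hd
          rw [← hξ0]
          exact h0.symm)
        rw [bAct_eq (p := u) (s := []) (ζ := ζ) (by rw [hru]; simp) (by simp [bpre]) hζ1
          (by simpa using hζ2)]
        exact hζ1
      · have hb' : ∀ m (hm : m < (y :: b).length),
            ξ.1 ((x :: a).length + m) = (y :: b)[m] := by
          intro m hm
          rw [hpre' _ (by rw [hWlen]; omega)]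
          simp only [hWdef]
          rw [List.getElem_append_right (by rw [FreeGroup.invRev_length]; omega)]
          congr 1
          rw [FreeGroup.invRev_length]; omega
        obtain ⟨ζ, hζ1, hζ2⟩ := exists_splice p ξ (x :: a).length (by
          have := hb' 0 (by simp)
          simp only [Nat.add_zero, List.getElem_cons_zero] at this
          rw [this]
          exact hb.infix ⟨[], b, by simp⟩)
        rw [bAct_eq (p := p) (s := x :: a) (ζ := ζ) hru ?_ hζ1 hζ2]
        · rw [List.length_append, bpre_add, hζ1]
          congr 1
          apply List.ext_getElem
          · simp [bseg]
          · intro i h1 h2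
            simp only [bseg, List.getElem_map, List.getElem_range]
            rw [hζ2, hb' i h2]
        · have h1 : bpre ξ W.length = bpre ξ (x :: a).length ++
              bseg ξ (x :: a).length (y :: b).length := by rw [hWlen, bpre_add]
          rw [hpre, hWdef] at h1
          exact (List.append_inj h1 (by rw [FreeGroup.invRev_length, bpre_length])).1.symm
    rcases hpre with hpre | hpre
    · obtain ⟨h1, h2⟩ := key ξ η h0 hpre
      exact ⟨_, _, by rw [dbAct, Sym2.map_mk, Sym2.eq_swap], h1, h2⟩
    · obtain ⟨h1, h2⟩ := key η ξ h0.symm hpre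
      exact ⟨_, _, by rw [dbAct, Sym2.map_mk], h1, h2⟩
  · rintro ⟨ξ, η, rfl, hξ, hη⟩
    obtain ⟨ξ', -, hξ'⟩ := exists_splice [] ξ u.length .singleton
    have hξQ : ∀ m, ξ.1 (u.length + m) = ξ'.1 m := by
      intro m; rw [← hξ' m]; simp
    have hη1 : FreeGroup.IsReduced (y :: b ++ [η.1 (p ++ y :: b).length]) := by
      have := isReduced_bpre η ((p ++ y :: b).length + 1)
      rw [bpre_add, hη] at this
      exact this.infix ⟨p, [], by simp [bseg]⟩
    obtain ⟨η', hηP, hηQ⟩ := exists_splice W η (p ++ y :: b).length (by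
      have := FreeGroup.IsReduced.append_overlap hW hη1 (by simp)
      simpa [hWdef] using this)
    refine ⟨s(ξ', η'), ⟨ξ', η', rfl, ?_, Or.inr ?_⟩, ?_⟩
    · have h1 : η'.1 0 = linv t := by
        have hpos : 0 < W.length := by rw [hWlen]; simp
        rw [bpre_eq_iff.1 hηP 0 hpos]
        rw [List.head?_eq_getElem?, List.getElem?_eq_getElem hpos] at hWhead
        exact Option.some.inj hWhead
      have h2 := isReduced_bpre ξ (u.length + 1)
      rw [bpre_add, hξ, isReduced_append] at h2
      rw [h1, ← hξQ 0]
      exact h2.2.2 t htu _ (by simp [bseg])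
    · rw [wordPrefixOf, wlen, hrW, hηP]
    · have h1 : bAct (FreeGroup.mk u) ξ' = ξ :=
        bAct_eq (p := u) (s := []) (by rw [hru]; simp) (by simp [bpre]) hξ (by simpa using hξQ)
      have h2 : bAct (FreeGroup.mk u) η' = η := by
        have hpre' := bpre_eq_iff.1 hηP
        refine bAct_eq (p := p) (s := x :: a) hru ?_ ?_ ?_
        · have h1 : bpre η' W.length = bpre η' (x :: a).length ++
              bseg η' (x :: a).length (y :: b).length := by rw [hWlen, bpre_add]
          rw [hηP, hWdef] at h1
          exact (List.append_inj h1 (by rw [FreeGroup.invRev_length, bpre_length])).1.symm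
        · rw [List.length_append, bpre_add] at hη
          exact (List.append_inj hη (bpre_length _ _)).1
        · intro m
          rcases Nat.lt_or_ge m (y :: b).length with hm | hm
          · rw [bpre_eq_iff.1 hη _ (by rw [List.length_append]; omega),
              hpre' _ (by rw [hWlen]; omega)]
            simp only [hWdef]
            rw [List.getElem_append_right (by omega),
              List.getElem_append_right (by rw [FreeGroup.invRev_length]; omega)]
            congr 1
            rw [FreeGroup.invRev_length]; omega
          · obtain ⟨k, rfl⟩ := Nat.exists_eq_add_of_le hm
            have e1 : p.length + ((y :: b).length + k) = (p ++ y :: b).length + k := by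
              rw [List.length_append]; omega
            have e2 : (x :: a).length + ((y :: b).length + k) = W.length + k := by
              rw [hWlen]; omega
            rw [e1, e2, hηQ]
      rw [dbAct, Sym2.map_mk, h1, h2]

/-! ### Geodesics outside `∂²𝒜` cross a word of `𝒞` -/

/-- The path between the points of the rays `ξ` and `η` at distance `R` from `1` is nondegenerate
and its label, read from `ξ` to `η`, contains an element of `𝒞`. -/
def Crosses {n r : ℕ} (A : Fin r → Subgroup (F n)) (L R : ℕ) (ξ η : Boundary n) : Prop :=
  bpre ξ R ≠ bpre η R ∧ (FreeGroup.mk (bpre ξ R))⁻¹ * FreeGroup.mk (bpre η R) ∈ FmA A L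

lemma Crosses.mono {n r L R R' : ℕ} {A : Fin r → Subgroup (F n)} {ξ η : Boundary n}
    (h : Crosses A L R ξ η) (hR : R ≤ R') : Crosses A L R' ξ η := by
  refine ⟨fun he => h.1 (bpre_mono hR he), ?_⟩
  obtain ⟨hne, x, hx, hinf⟩ := h
  obtain ⟨k, rfl⟩ := Nat.exists_eq_add_of_le hR
  obtain ⟨p, s, t, a, b, hst, ha, hb⟩ := exists_branch _ _ (by simp [bpre_length]) hne
  refine ⟨x, hx, hinf.trans ?_⟩
  have ha' := isReduced_bpre ξ R
  have hb' := isReduced_bpre η R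
  have ha2 := isReduced_bpre ξ (R + k)
  have hb2 := isReduced_bpre η (R + k)
  rw [bpre_add, ha, List.append_assoc, List.cons_append] at ha2
  rw [bpre_add, hb, List.append_assoc, List.cons_append] at hb2
  rw [ha] at ha'
  rw [hb] at hb'
  rw [bpre_add, bpre_add, ha, hb, List.append_assoc, List.append_assoc, mk_inv_mul_mk,
    mk_inv_mul_mk, List.cons_append, List.cons_append, rword_mk (rword_branch hst ha' hb'),
    rword_mk (rword_branch hst ha2 hb2)]
  refine ⟨FreeGroup.invRev (bseg ξ R k), bseg η R k, ?_⟩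
  rw [← List.cons_append, FreeGroup.invRev_append]
  simp

/-- A geodesic crossing no word of `𝒞` lies in a single tree `T_B`, hence both its ends lie in
the limit set of `B`. -/
lemma exists_crosses {n r L : ℕ} {A : Fin r → Subgroup (F n)} (hdiam : DiamBound A L)
    {ξ η : Boundary n} (hne : ξ ≠ η) (hA : s(ξ, η) ∉ dblBndA A) :
    ∃ R, Crosses A L R ξ η := by
  by_contra hcon
  push Not at hcon
  obtain ⟨c, hc, hcmin⟩ : ∃ c, ξ.1 c ≠ η.1 c ∧ ∀ i < c, ξ.1 i = η.1 i := by
    have hex : ∃ c, ξ.1 c ≠ η.1 c := by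
      by_contra h
      push Not at h
      exact hne (Subtype.ext (funext h))
    exact ⟨Nat.find hex, Nat.find_spec hex, fun i hi => not_not.1 (Nat.find_min hex hi)⟩
  have hpc : bpre ξ c = bpre η c := bpre_congr.2 hcmin
  -- label of the geodesic from distance `k` before to distance `k` after its branch point
  let W : ℕ → List (Letter n) := fun k => FreeGroup.invRev (bseg ξ c k) ++ bseg η c k
  have hWr : ∀ k, FreeGroup.IsReduced (W k) := by
    intro k
    apply isReduced_invRev_append (isReduced_bseg _ _ _) (isReduced_bseg _ _ _)
    intro x hx y hy
    cases k with
    | zero => simp [bseg] at hx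
    | succ k =>
      simp [bseg, List.range_succ_eq_map] at hx hy
      rw [← hx, ← hy]
      exact hc
  have hWl : ∀ k, (W k).length = k + k := by
    intro k; simp [W, bseg_length]
  have hxy : ∀ k, (FreeGroup.mk (bpre ξ (c + k)))⁻¹ * FreeGroup.mk (bpre η (c + k))
      = FreeGroup.mk (W k) := by
    intro k
    rw [bpre_add, bpre_add, hpc, mk_inv_mul_mk]
  have htree : ∀ k, L + 2 ≤ k → ∃ B, InSystem A B ∧ ∀ m ≤ (W k).length,
      FreeGroup.mk (bpre ξ (c + k)) * FreeGroup.mk ((W k).take m) ∈ treeVerts B := by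
    intro k hk
    have hnF : FreeGroup.mk (W k) ∉ FmA A L := by
      intro hF
      refine hcon (c + k) ⟨fun he => hc (bpre_congr.1 he c (by omega)), ?_⟩
      rwa [hxy]
    obtain ⟨B, hB, hm⟩ := exists_tree_of_not_FmA hdiam (hWr k) (by rw [hWl]; omega) hnF
    exact ⟨_, hB.conj _, fun m hm' => mul_mem_treeVerts (hm m hm') _⟩
  obtain ⟨B, hB, hB0⟩ := htree (L + 2) le_rfl
  have hall : ∀ k, FreeGroup.mk (bpre ξ (c + (L + 2 + k))) ∈ treeVerts B ∧
      FreeGroup.mk (bpre η (c + (L + 2 + k))) ∈ treeVerts B := by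
    intro k
    obtain ⟨B', hB', hBm⟩ := htree (L + 2 + k) (by omega)
    have hx : FreeGroup.mk (bpre ξ (c + (L + 2 + k))) ∈ treeVerts B' := by
      have := hBm 0 (Nat.zero_le _)
      rwa [List.take_zero, ← FreeGroup.one_eq_mk, mul_one] at this
    have hy : ∀ k B', (∀ m ≤ (W k).length,
        FreeGroup.mk (bpre ξ (c + k)) * FreeGroup.mk ((W k).take m) ∈ treeVerts B') →
        FreeGroup.mk (bpre η (c + k)) ∈ treeVerts B' := by
      intro k B' h
      have := h _ le_rfl
      rwa [List.take_length, ← hxy, mul_inv_cancel_left] at this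
    have hWk : W (L + 2 + k) = FreeGroup.invRev (bseg ξ (c + (L + 2)) k) ++
        (W (L + 2) ++ bseg η (c + (L + 2)) k) := by
      simp only [W, bseg_add, FreeGroup.invRev_append, List.append_assoc]
    have hx' : FreeGroup.mk (bpre ξ (c + (L + 2))) ∈ treeVerts B' := by
      have := hBm k (by rw [hWl]; omega)
      rw [hWk, List.take_left' (by rw [FreeGroup.invRev_length, bseg_length]), ← Nat.add_assoc,
        bpre_add, ← FreeGroup.mul_mk, ← FreeGroup.inv_mk, mul_inv_cancel_right] at this
      exact this
    have hy' : FreeGroup.mk (bpre η (c + (L + 2))) ∈ treeVerts B' := by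
      have := hBm (k + (W (L + 2)).length) (by rw [hWl, hWl]; omega)
      rw [hWk, ← List.append_assoc, List.take_left' (by
          rw [List.length_append, FreeGroup.invRev_length, bseg_length]), ← Nat.add_assoc,
        bpre_add, ← FreeGroup.mul_mk, ← FreeGroup.mul_mk, ← FreeGroup.inv_mk, ← mul_assoc,
        mul_inv_cancel_right, ← hxy, mul_inv_cancel_left] at this
      exact this
    have hBB : B = B' := by
      by_contra hne
      have hx0 := hB0 0 (Nat.zero_le _)
      rw [List.take_zero, ← FreeGroup.one_eq_mk, mul_one] at hx0
      have := hdiam B B' hB hB' hne _ ⟨hx0, hx'⟩ _ ⟨hy _ _ hB0, hy'⟩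
      rw [dist', hxy, wlen, rword_mk (hWr _), hWl] at this
      omega
    rw [hBB]
    exact ⟨hx, hy _ _ hBm⟩
  have hlim : ∀ ζ : Boundary n,
      (∀ k, FreeGroup.mk (bpre ζ (c + (L + 2 + k))) ∈ treeVerts B) → ζ ∈ limitSet B := by
    intro ζ hζ m
    obtain ⟨b, hb, hpre⟩ := exists_prefix_of_treeVerts (hζ m)
    rw [rword_mk (isReduced_bpre _ _)] at hpre
    exact ⟨b, hb, (bpre_prefix ζ (by omega)).trans hpre⟩
  obtain ⟨i, g, rfl⟩ := hB
  exact hA ⟨i, g, ξ, η, rfl, hlim ξ fun k => (hall k).1, hlim η fun k => (hall k).2⟩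

/-! ### Traces on spheres -/

/-- The unordered pair of points at which the two rays of `z` cross the sphere of radius `R`. -/
def trace {n : ℕ} (R : ℕ) : Sym2 (Boundary n) → Sym2 (List (Letter n)) :=
  Sym2.map fun ξ => bpre ξ R

lemma trace_mk {n : ℕ} (R : ℕ) (ξ η : Boundary n) :
    trace R s(ξ, η) = s(bpre ξ R, bpre η R) := rfl

lemma trace_eq_mk {n : ℕ} {R : ℕ} {z : Sym2 (Boundary n)} {u v : List (Letter n)}
    (h : trace R z = s(u, v)) : ∃ ξ η, z = s(ξ, η) ∧ bpre ξ R = u ∧ bpre η R = v := by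
  induction z using Sym2.ind with
  | _ ξ η =>
    rw [trace_mk, Sym2.eq_iff] at h
    rcases h with ⟨h1, h2⟩ | ⟨h1, h2⟩
    · exact ⟨ξ, η, rfl, h1, h2⟩
    · exact ⟨η, ξ, Sym2.eq_swap, h2, h1⟩

lemma trace_mono {n : ℕ} {R R' : ℕ} (hR : R ≤ R') {z z' : Sym2 (Boundary n)}
    (h : trace R' z = trace R' z') : trace R z = trace R z' := by
  induction z' using Sym2.ind with
  | _ ξ' η' =>
    obtain ⟨ξ, η, rfl, h1, h2⟩ := trace_eq_mk h
    rw [trace_mk, trace_mk, bpre_mono hR h1, bpre_mono hR h2]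

lemma isOpen_bpre {n : ℕ} (R : ℕ) (u : List (Letter n)) :
    IsOpen { ξ : Boundary n | bpre ξ R = u } := by
  have hcont : Continuous fun ξ : Boundary n => fun i : Fin R => ξ.1 i :=
    continuous_pi fun i => (continuous_apply (i : ℕ)).comp continuous_subtype_val
  have : { ξ : Boundary n | bpre ξ R = u } =
      (fun ξ : Boundary n => fun i : Fin R => ξ.1 i) ⁻¹'
        { f | List.ofFn f = u } := by
    ext ξ
    simp only [Set.mem_ofPred_eq, Set.mem_preimage]
    have e : bpre ξ R = List.ofFn fun i : Fin R => ξ.1 i := by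
      apply List.ext_getElem
      · simp [bpre]
      · intro i h1 h2; simp [bpre]
    rw [e]
  rw [this]
  exact (isOpen_discrete _).preimage hcont

lemma isOpen_trace {n : ℕ} (R : ℕ) (q : Sym2 (List (Letter n))) :
    IsOpen { z : Sym2 (Boundary n) | trace R z = q } := by
  apply isOpen_coinduced.2
  induction q using Sym2.ind with
  | _ u v =>
    have : (Quot.mk (Sym2.Rel (Boundary n))) ⁻¹' { z | trace R z = s(u, v) } =
        ({ ξ | bpre ξ R = u } ×ˢ { ξ | bpre ξ R = v }) ∪
        ({ ξ | bpre ξ R = v } ×ˢ { ξ | bpre ξ R = u }) := by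
      ext ⟨ξ, η⟩
      change s(bpre ξ R, bpre η R) = s(u, v) ↔ _
      rw [Sym2.eq_iff]
      simp
    rw [this]
    exact ((isOpen_bpre R u).prod (isOpen_bpre R v)).union
      ((isOpen_bpre R v).prod (isOpen_bpre R u))

lemma exists_bpre_subset {n : ℕ} {ξ : Boundary n} {U : Set (Boundary n)} (hU : U ∈ nhds ξ) :
    ∃ R, ∀ ζ, bpre ζ R = bpre ξ R → ζ ∈ U := by
  obtain ⟨V, hV, hVU⟩ := mem_nhds_induced _ _ _ |>.1 hU
  rw [nhds_pi, Filter.mem_pi] at hV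
  obtain ⟨I, hI, t, ht, hsub⟩ := hV
  obtain ⟨M, hM⟩ := hI.bddAbove
  refine ⟨M + 1, fun ζ hζ => hVU (hsub ?_)⟩
  intro i hi
  have : ζ.1 i = ξ.1 i := bpre_congr.1 hζ i (Nat.lt_succ_of_le (hM hi))
  rw [this]
  exact mem_of_mem_nhds (ht i)

/-- The sets of pairs with prescribed trace form neighbourhood bases. -/
lemma exists_trace_subset {n : ℕ} {z : Sym2 (Boundary n)} {V : Set (Sym2 (Boundary n))}
    (hV : IsOpen V) (hz : z ∈ V) : ∃ R, ∀ z', trace R z' = trace R z → z' ∈ V := by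
  induction z using Sym2.ind with
  | _ ξ η =>
    have hV' : IsOpen ((Quot.mk (Sym2.Rel (Boundary n))) ⁻¹' V) := isOpen_coinduced.1 hV
    have hn : (Quot.mk (Sym2.Rel (Boundary n))) ⁻¹' V ∈ nhds (ξ, η) := hV'.mem_nhds hz
    rw [nhds_prod_eq, Filter.mem_prod_iff] at hn
    obtain ⟨U₁, hU₁, U₂, hU₂, hsub⟩ := hn
    obtain ⟨R₁, h₁⟩ := exists_bpre_subset hU₁
    obtain ⟨R₂, h₂⟩ := exists_bpre_subset hU₂
    refine ⟨max R₁ R₂, fun z' hz' => ?_⟩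
    obtain ⟨ξ', η', rfl, e1, e2⟩ := trace_eq_mk hz'
    exact hsub (Set.mk_mem_prod (h₁ _ (bpre_mono (le_max_left _ _) e1))
      (h₂ _ (bpre_mono (le_max_right _ _) e2)))

/-- If the path joining the two points of the trace contains an element of `𝒞`, then the set of
pairs with that trace is a translated cylinder of `Cyl(𝒞)`. -/
lemma exists_relCylG {n r L R : ℕ} {A : Fin r → Subgroup (F n)} {ξ η : Boundary n}
    (h : Crosses A L R ξ η) :
    ∃ g w : F n, w ∈ FmA A L ∧
      relCylG A g w = { z : ↥(relSet A) | trace R z.1 = trace R s(ξ, η) } := by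
  obtain ⟨hne, hF⟩ := h
  refine ⟨FreeGroup.mk (bpre ξ R), _, hF, ?_⟩
  obtain ⟨p, s, t, a, b, hst, ha, hb⟩ := exists_branch _ _ (by simp [bpre_length]) hne
  have ha' := isReduced_bpre ξ R
  have hb' := isReduced_bpre η R
  have hla := bpre_length ξ R
  have hlb := bpre_length η R
  rw [ha] at ha' hla
  rw [hb] at hb' hlb
  rw [trace_mk, relCylG, ha, hb, mk_inv_mul_mk, image_cylinder hst ha' hb', hla, hlb]
  ext z
  simp only [Set.mem_preimage, Set.mem_ofPred_eq]
  constructor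
  · rintro ⟨ξ', η', e, h1, h2⟩
    rw [e, trace_mk, h1, h2]
  · exact trace_eq_mk

lemma finite_range_trace {n : ℕ} (R : ℕ) : (Set.range (trace (n := n) R)).Finite := by
  have hfin : {l : List (Letter n) | l.length = R}.Finite := List.finite_length_eq _ R
  refine ((hfin.prod hfin).image fun q => s(q.1, q.2)).subset ?_
  rintro _ ⟨z, rfl⟩
  induction z using Sym2.ind with
  | _ ξ η => exact ⟨(bpre ξ R, bpre η R), ⟨bpre_length _ _, bpre_length _ _⟩, rfl⟩

/-- Every compact open subset of ∂²(F_n,𝒜) is a finite disjoint union of cylinders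
from Cyl(𝒞). -/
theorem statement_8 (n r L : ℕ) (hn : 3 ≤ n) (A : Fin r → Subgroup (F n))
    (hsys : IsSystem A) (hmal : SystemMalnormal A) (hL : 1 ≤ L)
    (hdiam : DiamBound A L) (hbase : ∀ i, (1 : F n) ∈ treeVerts (A i))
    (C : Set ↥(relSet A)) (hC : IsCompact C) (hCo : IsOpen C) :
    ∃ (k : ℕ) (g w : Fin k → F n),
      (∀ i, w i ∈ FmA A L) ∧
      (∀ i j, i ≠ j → relCylG A (g i) (w i) ∩ relCylG A (g j) (w j) = ∅) ∧
      C = ⋃ i, relCylG A (g i) (w i) := by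
  -- `Good R z`: at radius `R` the trace class of `z` is contained in `C` and crosses `𝒞`
  let Good : ℕ → ↥(relSet A) → Prop := fun R z =>
    (∀ z' : ↥(relSet A), trace R z'.1 = trace R z.1 → z' ∈ C) ∧
    ∃ ξ η, z.1 = s(ξ, η) ∧ Crosses A L R ξ η
  have hmono : ∀ R R' (z z' : ↥(relSet A)), R ≤ R' → Good R z → trace R z'.1 = trace R z.1 →
      Good R' z' := by
    rintro R R' z z' hR ⟨h1, ξ, η, hz, hcr⟩ htr
    refine ⟨fun z'' h => h1 z'' ((trace_mono hR h).trans htr), ?_⟩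
    rw [hz] at htr
    obtain ⟨ξ', η', hz', e1, e2⟩ := trace_eq_mk htr
    refine ⟨ξ', η', hz', Crosses.mono (R := R) ?_ hR⟩
    rw [Crosses, e1, e2]
    exact hcr
  have hgood : ∀ z ∈ C, ∃ R, Good R z := by
    intro z hz
    obtain ⟨V, hV, hVC⟩ := isOpen_induced_iff.1 hCo
    obtain ⟨R₁, h₁⟩ := exists_trace_subset (z := z.1) hV (by rw [← hVC] at hz; exact hz)
    obtain ⟨ξ, η, hzξ⟩ : ∃ ξ η, z.1 = s(ξ, η) := by
      induction z.1 using Sym2.ind with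
      | _ ξ η => exact ⟨ξ, η, rfl⟩
    have hrel := z.2
    rw [hzξ] at hrel
    obtain ⟨R₂, h₂⟩ := exists_crosses hdiam (fun h => hrel.1 (Sym2.mk_isDiag_iff.2 h)) hrel.2
    refine ⟨max R₁ R₂, fun z' htr => ?_, ξ, η, hzξ, h₂.mono (le_max_right _ _)⟩
    rw [← hVC]
    exact h₁ _ (trace_mono (le_max_left _ _) htr)
  -- by compactness one radius works for all points of `C`
  obtain ⟨R, hR⟩ : ∃ R, ∀ z ∈ C, Good R z := by
    choose! ρ hρ using hgood
    obtain ⟨t, htC, hcov⟩ := hC.elim_nhds_subcover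
      (fun z => { z' : ↥(relSet A) | trace (ρ z) z'.1 = trace (ρ z) z.1 })
      (fun z _ => ((isOpen_trace (ρ z) _).preimage continuous_subtype_val).mem_nhds rfl)
    refine ⟨t.sup ρ, fun z hz => ?_⟩
    obtain ⟨y, hy, hzy⟩ := Set.mem_iUnion₂.1 (hcov hz)
    exact hmono (ρ y) _ y z (Finset.le_sup hy) (hρ y (htC y hy)) hzy
  -- the classes of equal trace at radius `R` meeting `C` partition `C` into cylinders
  let Q : Set (Sym2 (List (Letter n))) := (fun z : ↥(relSet A) => trace R z.1) '' C
  have hQ : Q.Finite := (finite_range_trace R).subset (by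
    rintro _ ⟨z, -, rfl⟩
    exact ⟨z.1, rfl⟩)
  have hcyl : ∀ q ∈ Q, ∃ g w : F n, w ∈ FmA A L ∧
      relCylG A g w = { z : ↥(relSet A) | trace R z.1 = q } := by
    rintro _ ⟨z, hz, rfl⟩
    obtain ⟨-, ξ, η, hzξ, hcr⟩ := hR z hz
    obtain ⟨g, w, hw, he⟩ := exists_relCylG hcr
    refine ⟨g, w, hw, ?_⟩
    rw [he, ← hzξ]
  choose! g w hw he using hcyl
  have := hQ.fintype
  let e := (Fintype.equivFin Q).symm
  refine ⟨Fintype.card Q, fun i => g (e i), fun i => w (e i), fun i => hw _ (e i).2, ?_, ?_⟩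
  · intro i j hij
    rw [he _ (e i).2, he _ (e j).2]
    ext z
    simp only [Set.mem_inter_iff, Set.mem_ofPred_eq, Set.mem_empty_iff_false, iff_false, not_and]
    intro h1 h2
    exact hij (e.injective (Subtype.ext (h1.symm.trans h2)))
  · ext z
    simp only [Set.mem_iUnion]
    constructor
    · intro hz
      refine ⟨e.symm ⟨trace R z.1, z, hz, rfl⟩, ?_⟩
      rw [he _ (e _).2, Equiv.apply_symm_apply]
      rfl
    · rintro ⟨i, hi⟩
      rw [he _ (e i).2] at hi
      obtain ⟨z', hz', hq⟩ := (e i).2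
      exact (hR z' hz').1 z (hi.trans hq.symm)

end RelCurr
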